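/- In the compact setting described in the context, a root α ∈ Φ belongs to Φ₁ ∪ Φ₂ if and only if α vanishes identically on 𝔱₀, i.e. α(Y) = 0 for all Y ∈ 𝔱₀. -/

import Mathlib

open scoped TensorProduct

/-- The root space `𝔤_θ ⊆ 𝔤_ℂ = ℂ ⊗[ℝ] L` of an ℝ-linear map `θ : 𝔱 → ℂ`:
`{Z | [H, Z] = θ(H)·Z for all H ∈ 𝔱}`. -/
def rootSet {L : Type*} [LieRing L] [LieAlgebra ℝ L]
    (t : Submodule ℝ L) (θ : t →ₗ[ℝ] ℂ) : Set (ℂ ⊗[ℝ] L) :=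
  {Z | ∀ H : t, ⁅(1 : ℂ) ⊗ₜ[ℝ] (H : L), Z⁆ = θ H • Z}

/-- `θ ∈ Φ`: `θ` is a root, i.e. `θ ≠ 0` and `𝔤_θ ≠ 0`. -/
def IsRoot {L : Type*} [LieRing L] [LieAlgebra ℝ L]
    (t : Submodule ℝ L) (θ : t →ₗ[ℝ] ℂ) : Prop :=
  θ ≠ 0 ∧ ∃ Z ∈ rootSet t θ, Z ≠ 0

/-- `θ ∈ Φ₁`: `θ` is a root with `𝔤_θ ⊆ 𝔨_ℂ`. -/
def IsRoot1 {L : Type*} [LieRing L] [LieAlgebra ℝ L]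
    (t k : Submodule ℝ L) (θ : t →ₗ[ℝ] ℂ) : Prop :=
  IsRoot t θ ∧ rootSet t θ ⊆ (k.baseChange ℂ : Set (ℂ ⊗[ℝ] L))

/-- `θ ∈ Φ₂`: `θ` is a root with `𝔤_θ ⊆ 𝔭_ℂ`. -/
def IsRoot2 {L : Type*} [LieRing L] [LieAlgebra ℝ L]
    (t p : Submodule ℝ L) (θ : t →ₗ[ℝ] ℂ) : Prop :=
  IsRoot t θ ∧ rootSet t θ ⊆ (p.baseChange ℂ : Set (ℂ ⊗[ℝ] L))

/-- `θ ∈ Φ₃ = Φ \ (Φ₁ ∪ Φ₂)`. -/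
def IsRoot3 {L : Type*} [LieRing L] [LieAlgebra ℝ L]
    (t k p : Submodule ℝ L) (θ : t →ₗ[ℝ] ℂ) : Prop :=
  IsRoot t θ ∧ ¬IsRoot1 t k θ ∧ ¬IsRoot2 t p θ

/-! Since `𝔤_ℂ` has nondegenerate Killing form and `𝔱_ℂ` is a Cartan subalgebra of it, the root
space `𝔤_α` is a line. The extension `σ_ℂ` carries `𝔤_α` to `𝔤_{σ*α}`. If `α` vanishes on `𝔱₀`,
then `σ*α = α`, because `H - σ H ∈ 𝔱₀` for `H ∈ 𝔱`; so `σ_ℂ` acts on the line `𝔤_α` by a scalar of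
square `1`, which puts `𝔤_α` in `𝔨_ℂ` or in `𝔭_ℂ`. Conversely, if `σ_ℂ Z = ± Z` for some nonzero
`Z ∈ 𝔤_α`, then applying `σ_ℂ` to `[Y, Z] = α(Y) Z` with `Y ∈ 𝔱₀` gives `-α(Y) = α(Y)`. -/

section DualSlice

variable {R A M : Type*} [CommRing R] [CommRing A] [Algebra R A] [AddCommGroup M] [Module R M]

/-- The contraction `a ⊗ x ↦ φ a • x` of the scalar factor of `A ⊗ M` against a linear form `φ`
on `A`. For `A = ℂ` over `ℝ` the forms `re` and `im` give the real and imaginary parts; in general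
these contractions reduce statements about `A ⊗ M` to statements about `M`. -/
def dualSlice (φ : Module.Dual R A) : A ⊗[R] M →ₗ[R] M :=
  (TensorProduct.lid R M).toLinearMap ∘ₗ φ.rTensor M

@[simp]
lemma dualSlice_tmul (φ : Module.Dual R A) (a : A) (x : M) : dualSlice φ (a ⊗ₜ[R] x) = φ a • x := by
  simp [dualSlice]

lemma dualSlice_baseChange {N : Type*} [AddCommGroup N] [Module R N] (φ : Module.Dual R A)
    (f : M →ₗ[R] N) (Z : A ⊗[R] M) : dualSlice φ (f.baseChange A Z) = f (dualSlice φ Z) := by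
  induction Z with
  | zero => simp
  | add Z W hZ hW => simp only [map_add, hZ, hW]
  | tmul a x => simp

lemma dualSlice_lie {L : Type*} [LieRing L] [LieAlgebra R L] [LieRingModule L M] [LieModule R L M]
    (φ : Module.Dual R A) (x : L) (Z : A ⊗[R] M) :
    dualSlice φ ⁅(1 : A) ⊗ₜ[R] x, Z⁆ = ⁅x, dualSlice φ Z⁆ := by
  rw [← LieModule.toEnd_apply_apply A (A ⊗[R] L) (A ⊗[R] M), LieModule.toEnd_baseChange,
    dualSlice_baseChange, LieModule.toEnd_apply_apply]

lemma apply_bilinForm_baseChange (φ : Module.Dual R A) (B : LinearMap.BilinForm R M)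
    (Z : A ⊗[R] M) (y : M) :
    φ (B.baseChange A Z (1 ⊗ₜ[R] y)) = B (dualSlice φ Z) y := by
  induction Z with
  | zero => simp
  | add Z W hZ hW => simp only [map_add, LinearMap.add_apply, hZ, hW]
  | tmul a x => simp [mul_comm]

lemma dualSlice_mem {q : Submodule R M} (φ : Module.Dual R A) {Z : A ⊗[R] M}
    (hZ : Z ∈ q.baseChange A) : dualSlice φ Z ∈ q := by
  obtain ⟨W, rfl⟩ := hZ
  rw [dualSlice_baseChange]
  exact (dualSlice φ W).2

variable [Module.Free R A]

lemma mem_baseChange_iff_forall_dualSlice (q : Submodule R M) (Z : A ⊗[R] M) :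
    Z ∈ q.baseChange A ↔ ∀ φ : Module.Dual R A, dualSlice φ Z ∈ q := by
  classical
  refine ⟨fun hZ φ ↦ dualSlice_mem φ hZ, fun hZ ↦ ?_⟩
  let b := Module.Free.chooseBasis R A
  let e := TensorProduct.equivFinsuppOfBasisLeft (N := M) b
  have he (i) : e Z i = dualSlice (b.coord i) Z := TensorProduct.equivFinsuppOfBasisLeft_apply b Z i
  rw [← e.symm_apply_apply Z, TensorProduct.equivFinsuppOfBasisLeft_symm_apply]
  refine Submodule.sum_mem _ fun i _ ↦ Submodule.tmul_mem_baseChange_of_mem (b i) ?_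
  exact he i ▸ hZ (b.coord i)

lemma eq_zero_iff_forall_dualSlice (Z : A ⊗[R] M) :
    Z = 0 ↔ ∀ φ : Module.Dual R A, dualSlice φ Z = 0 := by
  simpa using mem_baseChange_iff_forall_dualSlice (⊥ : Submodule R M) Z

lemma mem_baseChange_eigenspace_iff (f : Module.End R M) (c : R) (Z : A ⊗[R] M) :
    Z ∈ (f.eigenspace c).baseChange A ↔ f.baseChange A Z = c • Z := by
  rw [mem_baseChange_iff_forall_dualSlice, ← sub_eq_zero, eq_zero_iff_forall_dualSlice]
  simp only [Module.End.mem_eigenspace_iff, map_sub, map_smul, dualSlice_baseChange, sub_eq_zero]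

end DualSlice

section BaseChange

variable {R : Type*} (A : Type*) {L L' : Type*} [CommRing R] [CommRing A] [Algebra R A]
  [LieRing L] [LieAlgebra R L] [LieRing L'] [LieAlgebra R L']

lemma isKilling_baseChange [Module.Free R A] [Module.Free R L] [Module.Finite R L]
    [LieAlgebra.IsKilling R L] : LieAlgebra.IsKilling A (A ⊗[R] L) where
  killingCompl_top_eq_bot := by
    refine (LieSubmodule.eq_bot_iff _).mpr fun Z hZ ↦ ?_
    refine (eq_zero_iff_forall_dualSlice Z).mpr fun φ ↦ ?_
    refine LinearMap.ker_eq_bot'.mp (LieAlgebra.IsKilling.ker_killingForm_eq_bot R L) _ ?_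
    ext y
    have hZy : killingForm A (A ⊗[R] L) Z (1 ⊗ₜ[R] y) = 0 := by
      rw [LieModule.traceForm_comm]
      exact (LieIdeal.mem_killingCompl A (A ⊗[R] L) ⊤).mp hZ _ (LieSubmodule.mem_top _)
    rw [← apply_bilinForm_baseChange, ← LieModule.traceForm_baseChange]
    exact (congrArg φ hZy).trans (map_zero φ)

/-- The extension of scalars `A ⊗ L →ₗ⁅A⁆ A ⊗ L'` of a homomorphism of Lie algebras over `R`. -/
def lieHomBaseChange (f : L →ₗ⁅R⁆ L') : A ⊗[R] L →ₗ⁅A⁆ A ⊗[R] L' where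
  toLinearMap := (f : L →ₗ[R] L').baseChange A
  map_lie' {x y} := (LieAlgebra.ExtendScalars.map (AlgHom.id R A) f).map_lie x y

lemma lieHomBaseChange_apply (f : L →ₗ⁅R⁆ L') (Z : A ⊗[R] L) :
    lieHomBaseChange A f Z = (f : L →ₗ[R] L').baseChange A Z := rfl

@[simp]
lemma lieHomBaseChange_tmul (f : L →ₗ⁅R⁆ L') (a : A) (x : L) :
    lieHomBaseChange A f (a ⊗ₜ[R] x) = a ⊗ₜ[R] f x := rfl

lemma lieHomBaseChange_involutive {f : L →ₗ⁅R⁆ L} (hf : Function.Involutive f) :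
    Function.Involutive (lieHomBaseChange A f) := fun Z ↦ by
  induction Z with
  | zero => simp
  | add Z W hZ hW => simp only [map_add, hZ, hW]
  | tmul a x => simp [hf x]

/-- The extension of scalars of a Lie subalgebra of `L`, as a Lie subalgebra of `A ⊗ L`. -/
def lieSubalgebraBaseChange (H : LieSubalgebra R L) : LieSubalgebra A (A ⊗[R] L) :=
  (lieHomBaseChange A H.incl).range

lemma mem_lieSubalgebraBaseChange {H : LieSubalgebra R L} {Z : A ⊗[R] L} :
    Z ∈ lieSubalgebraBaseChange A H ↔ Z ∈ H.toSubmodule.baseChange A := Iff.rfl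

lemma isCartanSubalgebra_lieSubalgebraBaseChange [Module.Free R A] (H : LieSubalgebra R L)
    [H.IsCartanSubalgebra] : (lieSubalgebraBaseChange A H).IsCartanSubalgebra where
  nilpotent := LieHom.isNilpotent_range _
  self_normalizing := by
    refine le_antisymm (fun Z hZ ↦ ?_) (LieSubalgebra.le_normalizer _)
    rw [mem_lieSubalgebraBaseChange, mem_baseChange_iff_forall_dualSlice]
    intro φ
    suffices dualSlice φ Z ∈ H.normalizer by
      rwa [LieSubalgebra.IsCartanSubalgebra.self_normalizing] at this
    refine (H.mem_normalizer_iff' _).mpr fun h hh ↦ ?_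
    rw [← dualSlice_lie]
    exact dualSlice_mem (q := H.toSubmodule) φ <|
      (LieSubalgebra.mem_normalizer_iff' _ Z).mp hZ _ <|
        (mem_lieSubalgebraBaseChange A).mpr (Submodule.tmul_mem_baseChange_of_mem 1 hh)

end BaseChange

section Anisotropic

variable {R L : Type*} [CommRing R] [LieRing L] [LieAlgebra R L]

lemma isKilling_of_anisotropic (hB : ∀ x : L, killingForm R L x x = 0 → x = 0) :
    LieAlgebra.IsKilling R L where
  killingCompl_top_eq_bot := (LieSubmodule.eq_bot_iff _).mpr fun x hx ↦
    hB x ((LieIdeal.mem_killingCompl R L ⊤).mp hx x (LieSubmodule.mem_top x))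

lemma lie_eq_zero_of_lie_lie_eq_zero (hB : ∀ x : L, killingForm R L x x = 0 → x = 0) {x y : L}
    (h : ⁅x, ⁅x, y⁆⁆ = 0) : ⁅x, y⁆ = 0 := by
  refine hB _ ?_
  rw [LieModule.traceForm_apply_lie_apply', h, map_zero, neg_zero]

lemma mem_of_maximal_abelian {t : Submodule R L}
    (ht : Maximal (fun s : Submodule R L ↦ ∀ x ∈ s, ∀ y ∈ s, ⁅x, y⁆ = 0) t) {u : L}
    (hu : ∀ h ∈ t, ⁅h, u⁆ = 0) : u ∈ t := by
  have hu' : ∀ h ∈ t, ⁅u, h⁆ = 0 := fun h hh ↦ by rw [← lie_skew, hu h hh, neg_zero]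
  suffices ∀ x ∈ t ⊔ Submodule.span R {u}, ∀ y ∈ t ⊔ Submodule.span R {u}, ⁅x, y⁆ = 0 from
    ht.le_of_ge this le_sup_left <|
      Submodule.mem_sup_right (Submodule.mem_span_singleton_self u)
  simp only [Submodule.mem_sup, Submodule.mem_span_singleton]
  rintro _ ⟨x, hx, _, ⟨a, rfl⟩, rfl⟩ _ ⟨y, hy, _, ⟨b, rfl⟩, rfl⟩
  simp [ht.prop x hx y hy, hu x hx, hu' y hy]

lemma exists_isCartanSubalgebra_of_maximal_abelian
    (hB : ∀ x : L, killingForm R L x x = 0 → x = 0) {t : Submodule R L}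
    (ht : Maximal (fun s : Submodule R L ↦ ∀ x ∈ s, ∀ y ∈ s, ⁅x, y⁆ = 0) t) :
    ∃ H : LieSubalgebra R L, H.IsCartanSubalgebra ∧ H.toSubmodule = t := by
  let H : LieSubalgebra R L :=
    { t with lie_mem' := fun {x y} hx hy ↦ (ht.prop x hx y hy).symm ▸ t.zero_mem }
  have : IsLieAbelian H := ⟨fun x y ↦ Subtype.ext (ht.prop x x.2 y y.2)⟩
  refine ⟨H, ⟨inferInstance, le_antisymm (fun u hu ↦ ?_) H.le_normalizer⟩, rfl⟩
  refine mem_of_maximal_abelian ht fun h hh ↦ lie_eq_zero_of_lie_lie_eq_zero hB ?_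
  exact ht.prop h hh _ ((H.mem_normalizer_iff' u).mp hu h hh)

end Anisotropic

lemma mem_span_singleton_of_common_eigenvalues {K L : Type*} [Field K] [CharZero K] [LieRing L]
    [LieAlgebra K L] [FiniteDimensional K L] [LieAlgebra.IsKilling K L] (H : LieSubalgebra K L)
    [H.IsCartanSubalgebra] [LieModule.IsTriangularizable K H L] {x y : L} (hx : x ≠ 0)
    (hxy : ∀ h ∈ H, ∃ c : K, ⁅h, x⁆ = c • x ∧ ⁅h, y⁆ = c • y) (hH : ∃ h ∈ H, ⁅h, x⁆ ≠ 0) :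
    y ∈ Submodule.span K {x} := by
  choose χ hχx hχy using fun h : H ↦ hxy h h.2
  have mem {z : L} (hz : ∀ h : H, ⁅(h : L), z⁆ = χ h • z) : z ∈ LieAlgebra.rootSpace H χ :=
    LieModule.weightSpace_le_genWeightSpace L χ ((LieModule.mem_weightSpace _ _).mpr hz)
  let α : LieModule.Weight K H L :=
    ⟨χ, fun hbot ↦ hx <| (LieSubmodule.eq_bot_iff _).mp hbot x (mem hχx)⟩
  have hα : α.IsNonZero := by
    rintro (hα : χ = 0)
    obtain ⟨h, hh, hne⟩ := hH
    exact hne <| by simpa [hα] using hχx ⟨h, hh⟩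
  obtain ⟨c, hc⟩ := (finrank_eq_one_iff_of_nonzero' (⟨x, mem hχx⟩ : LieAlgebra.rootSpace H χ)
    (by simpa [Subtype.ext_iff] using hx)).mp (LieAlgebra.IsKilling.finrank_rootSpace_eq_one α hα)
    ⟨y, mem hχy⟩
  exact Submodule.mem_span_singleton.mpr ⟨c, congrArg Subtype.val hc⟩

section RootSet

variable {L : Type*} [LieRing L] [LieAlgebra ℝ L] {t : Submodule ℝ L} {α : t →ₗ[ℝ] ℂ}

lemma exists_common_eigenvalue_of_mem_baseChange {h : ℂ ⊗[ℝ] L} (hh : h ∈ t.baseChange ℂ) :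
    ∃ c : ℂ, ∀ Z ∈ rootSet t α, ⁅h, Z⁆ = c • Z := by
  rw [Submodule.baseChange_eq_span] at hh
  induction hh using Submodule.span_induction with
  | mem h hh =>
    obtain ⟨x, hx, rfl⟩ := hh
    exact ⟨α ⟨x, hx⟩, fun Z hZ ↦ hZ ⟨x, hx⟩⟩
  | zero => exact ⟨0, fun Z _ ↦ by rw [zero_lie, zero_smul]⟩
  | add h h' _ _ ih ih' =>
    obtain ⟨c, hc⟩ := ih
    obtain ⟨c', hc'⟩ := ih'
    exact ⟨c + c', fun Z hZ ↦ by rw [add_lie, hc Z hZ, hc' Z hZ, add_smul]⟩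
  | smul a h _ ih =>
    obtain ⟨c, hc⟩ := ih
    exact ⟨a * c, fun Z hZ ↦ by rw [smul_lie, hc Z hZ, mul_smul]⟩

lemma mem_span_singleton_of_mem_rootSet [Module.Finite ℝ L] [LieAlgebra.IsKilling ℝ L]
    {H : LieSubalgebra ℝ L} [H.IsCartanSubalgebra] {α : H.toSubmodule →ₗ[ℝ] ℂ} (hα : α ≠ 0)
    {Z W : ℂ ⊗[ℝ] L} (hZ : Z ∈ rootSet H.toSubmodule α) (hZ0 : Z ≠ 0)
    (hW : W ∈ rootSet H.toSubmodule α) : W ∈ Submodule.span ℂ {Z} := by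
  have : LieAlgebra.IsKilling ℂ (ℂ ⊗[ℝ] L) := isKilling_baseChange ℂ
  have := isCartanSubalgebra_lieSubalgebraBaseChange ℂ H
  refine mem_span_singleton_of_common_eigenvalues (lieSubalgebraBaseChange ℂ H) hZ0
    (fun h hh ↦ ?_) ?_
  · rw [mem_lieSubalgebraBaseChange] at hh
    obtain ⟨c, hc⟩ := exists_common_eigenvalue_of_mem_baseChange (α := α) hh
    exact ⟨c, hc Z hZ, hc W hW⟩
  · obtain ⟨h, hh⟩ := DFunLike.ne_iff.mp hα
    refine ⟨1 ⊗ₜ[ℝ] (h : L), (mem_lieSubalgebraBaseChange ℂ).mpr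
      (Submodule.tmul_mem_baseChange_of_mem 1 h.2), ?_⟩
    rw [hZ h]
    exact smul_ne_zero hh hZ0

variable {σ : L →ₗ⁅ℝ⁆ L}

lemma root_apply_eq_zero {Z : ℂ ⊗[ℝ] L} (hZ : Z ∈ rootSet t α) (hZ0 : Z ≠ 0) {c : ℂ} (hc : c ≠ 0)
    (hσZ : lieHomBaseChange ℂ σ Z = c • Z) {Y : t} (hY : σ Y = -Y) : α Y = 0 := by
  have h : -α Y • Z = α Y • Z := by
    have := congrArg (lieHomBaseChange ℂ σ) (hZ Y)
    rw [LieHom.map_lie, lieHomBaseChange_tmul, hY, TensorProduct.tmul_neg, neg_lie, map_smul, hσZ,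
      lie_smul, hZ Y, ← smul_neg, smul_comm (α Y), ← neg_smul] at this
    exact smul_right_injective _ hc this
  exact neg_eq_self.mp (smul_left_injective ℂ hZ0 h)

lemma lieHomBaseChange_mem_rootSet (hσ : Function.Involutive σ) (hσt : ∀ x ∈ t, σ x ∈ t)
    (hα : ∀ Y : t, σ Y = -Y → α Y = 0) {Z : ℂ ⊗[ℝ] L} (hZ : Z ∈ rootSet t α) :
    lieHomBaseChange ℂ σ Z ∈ rootSet t α := by
  intro h
  have hσα : α ⟨σ h, hσt h h.2⟩ = α h := by
    rw [← sub_eq_zero, ← map_sub]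
    exact hα _ (by simp [hσ _])
  rw [← hσα, ← map_smul, ← hZ, LieHom.map_lie, lieHomBaseChange_tmul, hσ]

lemma lieHomBaseChange_eq_or_eq_neg_of_mem_rootSet [Module.Finite ℝ L] [LieAlgebra.IsKilling ℝ L]
    {H : LieSubalgebra ℝ L} [H.IsCartanSubalgebra] {α : H.toSubmodule →ₗ[ℝ] ℂ}
    (hα : IsRoot H.toSubmodule α) (hσ : Function.Involutive σ) (hσH : ∀ x ∈ H, σ x ∈ H)
    (hα0 : ∀ Y : H.toSubmodule, σ Y = -Y → α Y = 0) :
    (∀ W ∈ rootSet H.toSubmodule α, lieHomBaseChange ℂ σ W = W) ∨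
      ∀ W ∈ rootSet H.toSubmodule α, lieHomBaseChange ℂ σ W = -W := by
  obtain ⟨hαne, Z, hZ, hZ0⟩ := hα
  have hline {W} (hW : W ∈ rootSet H.toSubmodule α) : ∃ a : ℂ, a • Z = W :=
    Submodule.mem_span_singleton.mp (mem_span_singleton_of_mem_rootSet hαne hZ hZ0 hW)
  obtain ⟨c, hc⟩ := hline (lieHomBaseChange_mem_rootSet hσ hσH hα0 hZ)
  have hc_sq : c * c = 1 := smul_left_injective ℂ hZ0 <| by
    simpa only [← hc, map_smul, smul_smul, one_smul] using lieHomBaseChange_involutive ℂ hσ Z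
  have hσW {W} (hW : W ∈ rootSet H.toSubmodule α) : lieHomBaseChange ℂ σ W = c • W := by
    obtain ⟨a, rfl⟩ := hline hW
    rw [map_smul, ← hc, smul_comm]
  exact (mul_self_eq_one_iff.mp hc_sq).imp (fun h W hW ↦ by rw [hσW hW, h, one_smul])
    fun h W hW ↦ by rw [hσW hW, h, neg_one_smul]

end RootSet

theorem stmt_12_general (L : Type*) [LieRing L] [LieAlgebra ℝ L] [Module.Finite ℝ L]
    [LieAlgebra.IsKilling ℝ L] (σ : L →ₗ⁅ℝ⁆ L) (hσinv : ∀ x, σ (σ x) = x)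
    (k p : Submodule ℝ L) (hk : ∀ x, x ∈ k ↔ σ x = x) (hp : ∀ x, x ∈ p ↔ σ x = -x)
    (H : LieSubalgebra ℝ L) [H.IsCartanSubalgebra] (hσH : ∀ x ∈ H, σ x ∈ H)
    (α : H.toSubmodule →ₗ[ℝ] ℂ) (hα : IsRoot H.toSubmodule α) :
    (IsRoot1 H.toSubmodule k α ∨ IsRoot2 H.toSubmodule p α) ↔
      ∀ Y : H.toSubmodule, (Y : L) ∈ p → α Y = 0 := by
  have mem_k (Z) : Z ∈ k.baseChange ℂ ↔ lieHomBaseChange ℂ σ Z = Z := by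
    obtain rfl : k = Module.End.eigenspace (σ : L →ₗ[ℝ] L) 1 := by ext; simp [hk]
    simpa [lieHomBaseChange_apply] using mem_baseChange_eigenspace_iff (σ : L →ₗ[ℝ] L) 1 Z
  have mem_p (Z) : Z ∈ p.baseChange ℂ ↔ lieHomBaseChange ℂ σ Z = -Z := by
    obtain rfl : p = Module.End.eigenspace (σ : L →ₗ[ℝ] L) (-1) := by ext; simp [hp]
    simpa [lieHomBaseChange_apply] using mem_baseChange_eigenspace_iff (σ : L →ₗ[ℝ] L) (-1) Z
  simp only [IsRoot1, IsRoot2, hα, true_and, Set.subset_def, SetLike.mem_coe, mem_k, mem_p, hp]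
  refine ⟨fun h Y hY ↦ ?_, lieHomBaseChange_eq_or_eq_neg_of_mem_rootSet hα hσinv hσH⟩
  obtain ⟨-, Z, hZ, hZ0⟩ := hα
  obtain h | h := h
  · exact root_apply_eq_zero hZ hZ0 one_ne_zero ((h Z hZ).trans (one_smul ℂ Z).symm) hY
  · exact root_apply_eq_zero hZ hZ0 (neg_ne_zero.mpr one_ne_zero)
      ((h Z hZ).trans (neg_one_smul ℂ Z).symm) hY

/-- In the compact setting (`𝔤` a finite-dimensional real Lie algebra with
negative definite Killing form, `σ` an involutive automorphism with fixed subalgebra `𝔨` and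
`(−1)`-eigenspace `𝔭`, `𝔱` a `σ`-stable maximal abelian subalgebra with `𝔱_K = 𝔱 ∩ 𝔨` maximal
abelian in `𝔨` and `𝔱₀ = 𝔱 ∩ 𝔭`), a root `α ∈ Φ` belongs to `Φ₁ ∪ Φ₂` if and only if `α`
vanishes identically on `𝔱₀`. -/
theorem stmt_12 (L : Type*) [LieRing L] [LieAlgebra ℝ L] [Module.Finite ℝ L]
    (hkill : ∀ x : L, x ≠ 0 → killingForm ℝ L x x < 0)
    (σ : L →ₗ⁅ℝ⁆ L) (hσinv : ∀ x, σ (σ x) = x)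
    (k p : Submodule ℝ L)
    (hk : ∀ x, x ∈ k ↔ σ x = x) (hp : ∀ x, x ∈ p ↔ σ x = -x)
    (t : Submodule ℝ L)
    (htab : ∀ x ∈ t, ∀ y ∈ t, ⁅x, y⁆ = 0)
    (htmax : ∀ s : Submodule ℝ L, (∀ x ∈ s, ∀ y ∈ s, ⁅x, y⁆ = 0) → t ≤ s → s = t)
    (hσt : ∀ x ∈ t, σ x ∈ t)
    (tK t0 : Submodule ℝ L) (htK : tK = t ⊓ k) (ht0 : t0 = t ⊓ p)
    (htKmax : ∀ s : Submodule ℝ L, s ≤ k → (∀ x ∈ s, ∀ y ∈ s, ⁅x, y⁆ = 0) → tK ≤ s → s = tK) :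
    ∀ α : t →ₗ[ℝ] ℂ, IsRoot t α →
      ((IsRoot1 t k α ∨ IsRoot2 t p α) ↔ ∀ Y : t, (Y : L) ∈ t0 → α Y = 0) := by
  intro α hα
  have hB (x : L) (hx : killingForm ℝ L x x = 0) : x = 0 := by_contra fun h ↦ (hkill x h).ne hx
  have := isKilling_of_anisotropic hB
  obtain ⟨H, hH, rfl⟩ := exists_isCartanSubalgebra_of_maximal_abelian hB
    ⟨htab, fun s hs hts ↦ (htmax s hs hts).le⟩
  simpa [ht0] using stmt_12_general L σ hσinv k p hk hp H hσt α hα
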